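/- Let v > 0 and q ∈ ℝ with q ≤ v, let W be a d×d real symmetric positive definite matrix and R a d×d real symmetric matrix with W − R positive semidefinite, and let t ≥ 0. Set ξ = v⁻¹(R − q·v⁻¹·W), A(t) = v⁻¹W + tI, and ρ(t) = A(t)^{−1/2} ξ A(t)^{−1/2}. Then tr(ρ(t)²·(3(v − q)·I − 2v·ρ(t))) ≥ 0. -/

import Mathlib

open Matrix
open scoped Classical

open scoped MatrixOrder in
/-- `A^(-1/2)`: the inverse of the unique positive semidefinite square root of `A`
(junk value `0` if `A` is not positive semidefinite). -/
noncomputable def invSqrt {d : ℕ} (A : Matrix (Fin d) (Fin d) ℝ) : Matrix (Fin d) (Fin d) ℝ :=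
  if h : A.PosSemidef then (CFC.sqrt A)⁻¹ else 0

/-!
Since `(v - q) A(t) - v ξ = (W - R) + (v - q) t I` is positive semidefinite, congruence by
`A(t)^(-1/2)` gives `v ρ ⪯ (v - q) I`. Hence
`M = 3(v - q) I - 2v ρ = (v - q) I + 2((v - q) I - v ρ)` is positive semidefinite, and
`tr(ρ² M) = tr(ρ M ρ) ≥ 0`.
-/

section LoewnerOrder

open scoped MatrixOrder ComplexOrder Ring

theorem conjSqrt_ringInverse_le_smul_one {𝓐 : Type*} [Ring 𝓐] [StarRing 𝓐] [PartialOrder 𝓐]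
    [StarOrderedRing 𝓐] [TopologicalSpace 𝓐] [IsSemitopologicalRing 𝓐] [T2Space 𝓐] [Algebra ℝ 𝓐]
    [ContinuousFunctionalCalculus ℝ 𝓐 IsSelfAdjoint] [NonnegSpectrumClass ℝ 𝓐]
    {a x : 𝓐} {c : ℝ} (ha : IsStrictlyPositive a) (hx : x ≤ c • a) :
    CFC.conjSqrt a⁻¹ʳ x ≤ c • 1 :=
  calc CFC.conjSqrt a⁻¹ʳ x ≤ CFC.conjSqrt a⁻¹ʳ (c • a) := CFC.conjSqrt_monotone hx
    _ = c • 1 := by rw [map_smul, CFC.conjSqrt_ringInverse_self a]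

theorem isSelfAdjoint_of_smul_le {K 𝓐 : Type*} [Field K] [StarRing K] [TrivialStar K]
    [NonUnitalRing 𝓐] [StarRing 𝓐] [PartialOrder 𝓐] [StarOrderedRing 𝓐] [Module K 𝓐]
    [StarModule K 𝓐] {a : K} {x y : 𝓐} (ha : a ≠ 0) (hy : IsSelfAdjoint y) (hxy : a • x ≤ y) :
    IsSelfAdjoint x := by
  have hax : IsSelfAdjoint (a • x) := hy.of_le hxy
  simpa only [inv_smul_smul₀ ha] using (IsSelfAdjoint.all a⁻¹).smul hax

theorem trace_mul_self_mul_nonneg {n R : Type*} [Fintype n] [CommRing R] [PartialOrder R]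
    [StarRing R] [StarOrderedRing R] {X M : Matrix n n R}
    (hX : X.IsHermitian) (hM : M.PosSemidef) : 0 ≤ (X * X * M).trace := by
  have h := (hM.mul_mul_conjTranspose_same X).trace_nonneg
  rwa [hX.eq, trace_mul_comm, ← Matrix.mul_assoc] at h

theorem invSqrt_mul_mul_invSqrt {d : ℕ} {A : Matrix (Fin d) (Fin d) ℝ} (hA : A.PosSemidef)
    (X : Matrix (Fin d) (Fin d) ℝ) : invSqrt A * X * invSqrt A = CFC.conjSqrt A⁻¹ X := by
  rw [invSqrt, dif_pos hA, hA.inv_sqrt, CFC.conjSqrt_apply]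

variable {n 𝕜 : Type*} [Fintype n] [DecidableEq n] [RCLike 𝕜]

theorem trace_mul_self_mul_sub_nonneg {X : Matrix n n 𝕜} {a c : ℝ} (ha : a ≠ 0) (hc : 0 ≤ c)
    (hX : a • X ≤ c • 1) :
    0 ≤ (X * X * ((3 * c) • (1 : Matrix n n 𝕜) - (2 * a) • X)).trace := by
  have hM : 0 ≤ (3 * c) • (1 : Matrix n n 𝕜) - (2 * a) • X :=
    calc (0 : Matrix n n 𝕜) ≤ c • 1 + (2 : ℝ) • (c • 1 - a • X) :=
        add_nonneg (smul_nonneg hc zero_le_one) (smul_nonneg zero_le_two (sub_nonneg.mpr hX))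
      _ = (3 * c) • 1 - (2 * a) • X := by module
  have hXH : X.IsHermitian := isSelfAdjoint_of_smul_le ha ((IsSelfAdjoint.all c).smul (.one _)) hX
  exact trace_mul_self_mul_nonneg hXH hM.posSemidef

theorem trace_rho_sq_mul_nonneg_general (v q t : ℝ) (W R : Matrix n n 𝕜) (hv : v ≠ 0)
    (hq : q ≤ v) (hA : (v⁻¹ • W + t • (1 : Matrix n n 𝕜)).PosDef)
    (hRW : R ≤ W + ((v - q) * t) • 1) :
    let ρ := CFC.conjSqrt (v⁻¹ • W + t • (1 : Matrix n n 𝕜))⁻¹ (v⁻¹ • (R - (q * v⁻¹) • W))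
    0 ≤ (ρ * ρ * ((3 * (v - q)) • (1 : Matrix n n 𝕜) - (2 * v) • ρ)).trace := by
  intro ρ
  have hξ : v • v⁻¹ • (R - (q * v⁻¹) • W) ≤ (v - q) • (v⁻¹ • W + t • (1 : Matrix n n 𝕜)) :=
    calc v • v⁻¹ • (R - (q * v⁻¹) • W) = R - (q * v⁻¹) • W := smul_inv_smul₀ hv _
      _ ≤ W + ((v - q) * t) • 1 - (q * v⁻¹) • W := sub_le_sub_right hRW _
      _ = (v - q) • (v⁻¹ • W + t • 1) := by match_scalars <;> field_simp
  have hρ : v • ρ ≤ (v - q) • 1 := by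
    simpa only [ρ, map_smul, nonsing_inv_eq_ringInverse] using
      conjSqrt_ringInverse_le_smul_one hA.isStrictlyPositive hξ
  exact trace_mul_self_mul_sub_nonneg hv (sub_nonneg.mpr hq) hρ

end LoewnerOrder

/-- With `ξ = v⁻¹(R - q v⁻¹ W)`, `A(t) = v⁻¹ W + t I`, `ρ(t) = A(t)^(-1/2) ξ A(t)^(-1/2)`,
we have `tr(ρ(t)² (3(v - q) I - 2v ρ(t))) ≥ 0`. -/
theorem trace_rho_sq_mul_nonneg {d : ℕ} (v q t : ℝ) (W R : Matrix (Fin d) (Fin d) ℝ)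
    (hv : 0 < v) (hq : q ≤ v) (hW : W.PosDef) (hR : R.IsSymm)
    (hWR : (W - R).PosSemidef) (ht : 0 ≤ t) :
    let ρ : Matrix (Fin d) (Fin d) ℝ :=
      invSqrt (v⁻¹ • W + t • 1) * (v⁻¹ • (R - (q * v⁻¹) • W)) * invSqrt (v⁻¹ • W + t • 1)
    0 ≤ (ρ * ρ * ((3 * (v - q)) • (1 : Matrix (Fin d) (Fin d) ℝ) - (2 * v) • ρ)).trace := by
  have hA : (v⁻¹ • W + t • (1 : Matrix (Fin d) (Fin d) ℝ)).PosDef :=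
    (hW.smul (inv_pos.mpr hv)).add_posSemidef (PosSemidef.one.smul ht)
  have hRW : (W + ((v - q) * t) • 1 - R).PosSemidef := by
    rw [add_sub_right_comm]
    exact hWR.add (PosSemidef.one.smul (mul_nonneg (sub_nonneg.mpr hq) ht))
  rw [invSqrt_mul_mul_invSqrt hA.posSemidef]
  exact trace_rho_sq_mul_nonneg_general v q t W R hv.ne' hq hA hRW
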